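/- Let m ≥ 1 be an integer and let N′ and N be Poisson random variables with means μ′ and μ respectively, where 0 ≤ μ′ ≤ μ. Then E[min(1, m/(N′+1))] ≥ E[min(1, m/(N+1))]; that is, μ ↦ E[min(1, m/(N_μ+1))] is nonincreasing in the Poisson mean μ. -/

import Mathlib

open MeasureTheory

/-!
A Poisson variable with the larger mean has the law of one with the smaller mean plus an
independent Poisson variable. Adding a nonnegative quantity can only decrease an antitone function
such as `n ↦ min(1, m/(n+1))`.
-/

section Convolution

variable {M : Type*} [AddMonoid M] [MeasurableSpace M] [MeasurableAdd₂ M] {μ ν : Measure M}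

lemma integrable_comp_add_of_integrable_conv {E : Type*} [NormedAddCommGroup E] {f : M → E}
    (hf : Integrable f (μ ∗ ν)) : Integrable (fun p : M × M ↦ f (p.1 + p.2)) (μ.prod ν) :=
  hf.comp_measurable measurable_add

variable [Preorder M] [CanonicallyOrderedAdd M] {f : M → ℝ}

lemma integrable_of_integrable_conv_of_antitone [IsFiniteMeasure μ] [IsFiniteMeasure ν] [NeZero ν]
    (hf : Antitone f) (hfμ : AEStronglyMeasurable f μ) (hfμν : Integrable f (μ ∗ ν)) :
    Integrable f μ := by
  -- On the product, `f x` lies between `f (x + y)` and the constant `f 0`.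
  have h_fst : Integrable (fun p : M × M ↦ f p.1) (μ.prod ν) :=
    integrable_of_le_of_le hfμ.comp_fst
      (ae_of_all _ fun _ ↦ hf le_self_add) (ae_of_all _ fun _ ↦ hf zero_le)
      (integrable_comp_add_of_integrable_conv hfμν) (integrable_const (f 0))
  exact h_fst.of_comp_fst (NeZero.ne ν)

lemma integral_conv_le_of_antitone [SFinite μ] [IsProbabilityMeasure ν]
    (hf : Antitone f) (hfμ : Integrable f μ) (hfμν : Integrable f (μ ∗ ν)) :
    ∫ x, f x ∂(μ ∗ ν) ≤ ∫ x, f x ∂μ :=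
  calc ∫ x, f x ∂(μ ∗ ν)
    _ = ∫ p : M × M, f (p.1 + p.2) ∂(μ.prod ν) :=
      integral_map measurable_add.aemeasurable hfμν.aestronglyMeasurable
    _ ≤ ∫ p : M × M, f p.1 ∂(μ.prod ν) :=
      integral_mono (integrable_comp_add_of_integrable_conv hfμν) (hfμ.comp_fst ν)
        fun _ ↦ hf le_self_add
    _ = ∫ x, f x ∂μ := by simp [integral_fun_fst]

end Convolution

lemma antitone_div_natCast_add_one {K : Type*} [Semifield K] [LinearOrder K] [IsStrictOrderedRing K]
    {c : K} (hc : 0 ≤ c) : Antitone fun n : ℕ ↦ c / ((n : K) + 1) := by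
  intro a b hab
  dsimp only
  gcongr

section Poisson

open ProbabilityTheory
open scoped NNReal

lemma integral_poissonMeasure_le_of_antitone {f : ℕ → ℝ} (hf : Antitone f) {r s : ℝ≥0}
    (hrs : r ≤ s) (hfs : Integrable f (poissonMeasure s)) :
    ∫ n, f n ∂(poissonMeasure s) ≤ ∫ n, f n ∂(poissonMeasure r) := by
  obtain ⟨t, rfl⟩ := exists_add_of_le hrs
  rw [← poissonMeasure_conv_poissonMeasure] at hfs ⊢
  exact integral_conv_le_of_antitone hf
    (integrable_of_integrable_conv_of_antitone hf .of_discrete hfs) hfs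

variable {Ω : Type*} [MeasurableSpace Ω] {P : Measure Ω}

lemma hasLaw_of_measure_singleton {α : Type*} [Countable α] [MeasurableSpace α]
    [MeasurableSingletonClass α] {μ : Measure α} {X : Ω → α} (hX : AEMeasurable X P)
    (h : ∀ a, P {ω | X ω = a} = μ {a}) : HasLaw X μ P where
  map_eq := Measure.ext_of_singleton fun a ↦
    (Measure.map_apply_of_aemeasurable hX (measurableSet_singleton a)).trans (h a)

lemma hasLaw_poissonMeasure {r : ℝ≥0} {N : Ω → ℕ} (hN : AEMeasurable N P)
    (h : ∀ i : ℕ, P {ω | N ω = i} = ENNReal.ofReal (Real.exp (-r) * r ^ i / (Nat.factorial i))) :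
    HasLaw N (poissonMeasure r) P :=
  hasLaw_of_measure_singleton hN fun i ↦ (h i).trans (poissonMeasure_singleton r i).symm

theorem stmt12_general {Ω₁ Ω₂ : Type*} [MeasurableSpace Ω₁] [MeasurableSpace Ω₂]
    {ℙ₁ : Measure Ω₁} {ℙ₂ : Measure Ω₂} {N' : Ω₁ → ℕ} (hN'm : AEMeasurable N' ℙ₁)
    {N : Ω₂ → ℕ} (hNm : AEMeasurable N ℙ₂) {μ' μ : ℝ} (hμ'0 : 0 ≤ μ') (hμ'μ : μ' ≤ μ)
    (hN' : ∀ i : ℕ,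
      ℙ₁ {ω | N' ω = i} = ENNReal.ofReal (Real.exp (-μ') * μ' ^ i / (Nat.factorial i)))
    (hN : ∀ i : ℕ, ℙ₂ {ω | N ω = i} = ENNReal.ofReal (Real.exp (-μ) * μ ^ i / (Nat.factorial i)))
    {f : ℕ → ℝ} (hf : Antitone f) (hfN : Integrable (fun ω ↦ f (N ω)) ℙ₂) :
    ∫ ω, f (N ω) ∂ℙ₂ ≤ ∫ ω, f (N' ω) ∂ℙ₁ := by
  lift μ' to ℝ≥0 using hμ'0
  lift μ to ℝ≥0 using μ'.2.trans hμ'μ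
  have law_N' : HasLaw N' (poissonMeasure μ') ℙ₁ := hasLaw_poissonMeasure hN'm hN'
  have law_N : HasLaw N (poissonMeasure μ) ℙ₂ := hasLaw_poissonMeasure hNm hN
  have hfμ : Integrable f (poissonMeasure μ) := by
    rw [← law_N.map_eq]
    exact (integrable_map_measure .of_discrete hNm).2 hfN
  calc ∫ ω, f (N ω) ∂ℙ₂
    _ = ∫ n, f n ∂(poissonMeasure μ) := law_N.integral_comp .of_discrete
    _ ≤ ∫ n, f n ∂(poissonMeasure μ') := integral_poissonMeasure_le_of_antitone hf hμ'μ hfμ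
    _ = ∫ ω, f (N' ω) ∂ℙ₁ := (law_N'.integral_comp .of_discrete).symm

end Poisson

/-- Let `m ≥ 1` be an integer and `N′`, `N` Poisson random variables with means
`0 ≤ μ′ ≤ μ`.  Then `E[min(1, m/(N′+1))] ≥ E[min(1, m/(N+1))]`; that is,
the quantity `E[min(1, m/(N_μ+1))]` is nonincreasing in the Poisson mean `μ`. -/
theorem stmt12 {Ω₁ Ω₂ : Type*} [MeasurableSpace Ω₁] [MeasurableSpace Ω₂]
    (ℙ₁ : Measure Ω₁) [IsProbabilityMeasure ℙ₁] (ℙ₂ : Measure Ω₂) [IsProbabilityMeasure ℙ₂]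
    (N' : Ω₁ → ℕ) (hN'm : Measurable N') (N : Ω₂ → ℕ) (hNm : Measurable N)
    (μ' μ : ℝ) (hμ'0 : 0 ≤ μ') (hμ'μ : μ' ≤ μ)
    (hN' : ∀ i : ℕ, ℙ₁ {ω | N' ω = i} = ENNReal.ofReal (Real.exp (-μ') * μ' ^ i / (Nat.factorial i)))
    (hN : ∀ i : ℕ, ℙ₂ {ω | N ω = i} = ENNReal.ofReal (Real.exp (-μ) * μ ^ i / (Nat.factorial i)))
    (m : ℕ) (hm : 1 ≤ m) :
    ∫ ω, min (1 : ℝ) ((m : ℝ) / ((N' ω : ℝ) + 1)) ∂ℙ₁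
      ≥ ∫ ω, min (1 : ℝ) ((m : ℝ) / ((N ω : ℝ) + 1)) ∂ℙ₂ :=
  stmt12_general hN'm.aemeasurable hNm.aemeasurable hμ'0 hμ'μ hN' hN
    (antitone_const.min (antitone_div_natCast_add_one m.cast_nonneg))
    (.of_mem_Icc 0 1 (by fun_prop) (ae_of_all _ fun _ ↦ ⟨by positivity, min_le_left _ _⟩))
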